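/- The 8×8 integer matrix A_{2,III} with rows [2,-2,-8,-16,-18,-14,-8,0], [-2,2,0,-8,-14,-18,-16,-8], [-8,0,2,-2,-8,-16,-18,-14], [-16,-8,-2,2,0,-8,-14,-18], [-18,-14,-8,0,2,-2,-8,-16], [-14,-18,-16,-8,-2,2,0,-8], [-8,-16,-18,-14,-8,0,2,-2], [0,-8,-14,-18,-16,-8,-2,2] satisfies: (a) it is a symmetric generalized Cartan matrix (symmetric, all diagonal entries 2, all off-diagonal entries nonpositive); (b) it has rank 3 over ℚ; (c) the real quadratic form x ↦ xᵀAx on ℝ⁸ is equivalent to the weighted sum of squares with weights (1,1,−1,0,0,0,0,0), i.e. A is hyperbolic of rank 3; (d) there exists c ∈ ℚ⁸ with Ac = −(1,…,1)ᵀ and cᵀAc < 0 (a lattice Weyl vector of negative square). -/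

import Mathlib

open Matrix

/-!
`A_{2,III}` is the Gram matrix of eight roots in a three-dimensional Lorentzian space: in
coordinates where the form is `x² + y² - 8z²`, the roots are `(p, 1)` with `p` running through the
eight points `(±3, ±1)`, `(±1, ±3)` of norm `10`, distinct ones having scalar product at most `8`.
So `A = Bᵀ D B` with `D = diag(1, 1, -8)` and `B` the `3 × 8` matrix of coordinates, whose rows are
orthogonal and hence independent; the rank and the signs of the nonzero weights of `A` are therefore
those of `D`. The points `p` sum to zero, so every row of `A` sums to `8 · (-8) = -64`, and
`(1/64, …, 1/64)` is a Weyl vector, of square `-8/64`.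
-/

section Congruence

variable {m n K : Type*} [Fintype n]

theorem rank_transpose_mul_mul_of_mul_eq_one [Fintype m] [DecidableEq m] [CommRing K]
    [StrongRankCondition K] {B : Matrix m n K} {R : Matrix n m K} (hBR : B * R = 1)
    (M : Matrix m m K) : (Bᵀ * M * B).rank = M.rank := by
  have hM : Rᵀ * (Bᵀ * M * B) * R = M := by
    calc Rᵀ * (Bᵀ * M * B) * R = (B * R)ᵀ * M * (B * R) := by
          simp only [transpose_mul, Matrix.mul_assoc]
      _ = M := by rw [hBR, transpose_one, Matrix.one_mul, Matrix.mul_one]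
  refine le_antisymm ((rank_mul_le_left _ _).trans (rank_mul_le_right _ _)) ?_
  conv_lhs => rw [← hM]
  exact (rank_mul_le_left _ _).trans (rank_mul_le_right _ _)

theorem linearIndependent_row_of_mul_eq_one [Finite m] [DecidableEq m] [CommRing K]
    {B : Matrix m n K} {R : Matrix n m K} (hBR : B * R = 1) : LinearIndependent K B.row := by
  cases nonempty_fintype m
  refine vecMul_injective_iff.mp (Function.LeftInverse.injective (g := (· ᵥ* R)) fun v ↦ ?_)
  change v ᵥ* B ᵥ* R = v
  rw [vecMul_vecMul, hBR, vecMul_one]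

theorem exists_map_intCast_mul_eq_one [Finite m] [DecidableEq m] [Field K] [CharZero K]
    {B : Matrix m n ℤ} {S : Matrix n m ℤ} {d : ℤ} (hd : d ≠ 0)
    (hBS : B * S = diagonal fun _ ↦ d) :
    ∃ R : Matrix n m K, B.map ((↑·) : ℤ → K) * R = 1 := by
  refine ⟨(d : K)⁻¹ • S.map (Int.castRingHom K), ?_⟩
  change B.map (Int.castRingHom K) * ((d : K)⁻¹ • S.map (Int.castRingHom K)) = 1
  rw [Matrix.mul_smul, ← Matrix.map_mul, hBS, diagonal_map (map_zero _), ← diagonal_smul,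
    ← diagonal_one]
  congr 1
  ext i
  simp [hd]

theorem exists_linearEquiv_apply_eq_of_linearIndependent {ι V : Type*} [Finite ι] [DivisionRing K]
    [AddCommGroup V] [Module K V] {v w : ι → V} (hv : LinearIndependent K v)
    (hw : LinearIndependent K w) : ∃ g : V ≃ₗ[K] V, ∀ i, g (v i) = w i := by
  have := Module.Finite.span_of_finite K (Set.finite_range v)
  obtain ⟨g, hg⟩ := Submodule.exists_linearEquiv_restrict_eq
    (hv.linearCombinationEquiv.symm ≪≫ₗ hw.linearCombinationEquiv)
  refine ⟨g, fun i ↦ ?_⟩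
  let x : Submodule.span K (Set.range v) := ⟨v i, Submodule.subset_span ⟨i, rfl⟩⟩
  have hx : hv.linearCombinationEquiv.symm x = Finsupp.single i 1 := hv.repr_eq_single i x rfl
  have hgx := hg x
  rw [LinearEquiv.trans_apply, hx] at hgx
  simpa [x] using hgx.symm

variable [DecidableEq n]

theorem exists_isUnit_det_submatrix_eq [Finite m] [Field K] {B : Matrix m n K}
    (hB : LinearIndependent K B.row) (f : m ↪ n) :
    ∃ E : Matrix n n K, IsUnit E.det ∧ E.submatrix f id = B := by
  obtain ⟨g, hg⟩ := exists_linearEquiv_apply_eq_of_linearIndependent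
    ((Pi.basisFun K n).linearIndependent.comp f f.injective) hB
  refine ⟨(LinearMap.toMatrix' (g : (n → K) →ₗ[K] n → K))ᵀ, ?_, ?_⟩
  · rw [det_transpose, LinearMap.det_toMatrix']
    exact g.isUnit_det'
  · ext k j
    simpa [LinearMap.toMatrix'_apply] using congrFun (hg k) j

variable [Fintype m] [DecidableEq m]

theorem transpose_submatrix_mul_diagonal_mul_submatrix [NonUnitalSemiring K]
    (E : Matrix n n K) (f : m ↪ n) (w : m → K) :
    (E.submatrix f id)ᵀ * diagonal w * E.submatrix f id =
      Eᵀ * diagonal (Function.extend f w 0) * E := by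
  ext i j
  rw [Matrix.mul_assoc, Matrix.mul_assoc, mul_apply, mul_apply]
  simp only [diagonal_mul, transpose_apply, submatrix_apply, id]
  refine Fintype.sum_of_injective f f.injective _ _ (fun k hk ↦ ?_) (fun k ↦ ?_)
  · rw [Function.extend_apply' _ _ _ hk, Pi.zero_apply, zero_mul, mul_zero]
  · rw [f.injective.extend_apply]

theorem exists_isUnit_det_transpose_mul_mul_eq_diagonal_extend [Field K]
    {B : Matrix m n K} (hB : LinearIndependent K B.row) (f : m ↪ n) (w : m → K) :
    ∃ P : Matrix n n K, IsUnit P.det ∧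
      Pᵀ * (Bᵀ * diagonal w * B) * P = diagonal (Function.extend f w 0) := by
  obtain ⟨E, hE, rfl⟩ := exists_isUnit_det_submatrix_eq hB f
  refine ⟨E⁻¹, isUnit_nonsing_inv_det E hE, ?_⟩
  rw [transpose_submatrix_mul_diagonal_mul_submatrix]
  calc E⁻¹ᵀ * (Eᵀ * diagonal (Function.extend f w 0) * E) * E⁻¹
      = (E * E⁻¹)ᵀ * diagonal (Function.extend f w 0) * (E * E⁻¹) := by
        simp only [transpose_mul, Matrix.mul_assoc]
    _ = diagonal (Function.extend f w 0) := by
        rw [mul_nonsing_inv E hE, transpose_one, Matrix.one_mul, Matrix.mul_one]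

end Congruence

theorem extend_castAddEmb {α : Type*} {p q : ℕ} (u : Fin p → α) (v : Fin (p + q) → α) :
    Function.extend (Fin.castAddEmb q) u v = Fin.append u (v ∘ Fin.natAdd p) := by
  refine funext (Fin.addCases (fun k ↦ ?_) fun k ↦ ?_)
  · rw [Fin.append_left, ← Fin.castAddEmb_apply, (Fin.castAddEmb q).injective.extend_apply]
  · rw [Fin.append_right, Function.extend_apply', Function.comp_apply]
    rintro ⟨l, hl⟩
    have hl_val : (l : ℕ) = p + k := congrArg Fin.val hl
    omega

theorem exists_ne_zero_mul_sign_mul_self_eq (a : ℝ) :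
    ∃ s : ℝ, s ≠ 0 ∧ s * SignType.sign a * s = a := by
  obtain rfl | ha := eq_or_ne a 0
  · exact ⟨1, one_ne_zero, by simp⟩
  · refine ⟨√|a|, by positivity, ?_⟩
    rw [mul_right_comm, Real.mul_self_sqrt (abs_nonneg a), abs_mul_sign]

theorem exists_isUnit_det_transpose_mul_mul_eq_diagonal_sign {m n : Type*} [Fintype m] [Fintype n]
    [DecidableEq m] [DecidableEq n] {B : Matrix m n ℝ} (hB : LinearIndependent ℝ B.row)
    (f : m ↪ n) (w : m → ℝ) :
    ∃ P : Matrix n n ℝ, IsUnit P.det ∧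
      Pᵀ * (Bᵀ * diagonal w * B) * P =
        diagonal (Function.extend f (fun k ↦ (SignType.sign (w k) : ℝ)) 0) := by
  choose s hs_ne hs using fun k ↦ exists_ne_zero_mul_sign_mul_self_eq (w k)
  have hsB : LinearIndependent ℝ (diagonal s * B).row := by
    convert hB.units_smul fun k ↦ Units.mk0 (s k) (hs_ne k)
    ext k j
    simp [Units.smul_def]
  have hw : (diagonal s * B)ᵀ * diagonal (fun k ↦ (SignType.sign (w k) : ℝ)) * (diagonal s * B) =
      Bᵀ * diagonal w * B := by
    have hdiag : diagonal s * diagonal (fun k ↦ (SignType.sign (w k) : ℝ)) * diagonal s =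
        diagonal w := by
      simp only [diagonal_mul_diagonal, hs]
    simp only [← hdiag, transpose_mul, diagonal_transpose, Matrix.mul_assoc]
  rw [← hw]
  exact exists_isUnit_det_transpose_mul_mul_eq_diagonal_extend hsB f _

theorem exists_weylVector_of_row_sum_eq {n K : Type*} [Fintype n] [Nonempty n] [Field K]
    [LinearOrder K] [IsStrictOrderedRing K] {A : Matrix n n K} {s : K} (hs : 0 < s)
    (hA : ∀ i, ∑ j, A i j = -s) :
    ∃ c : n → K, (∀ i, (A *ᵥ c) i = -1) ∧ c ⬝ᵥ A *ᵥ c < 0 := by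
  have hc : ∀ i, (A *ᵥ fun _ ↦ s⁻¹) i = -1 := fun i ↦ by
    rw [mulVec, dotProduct, ← Finset.sum_mul, hA, neg_mul, mul_inv_cancel₀ hs.ne']
  refine ⟨fun _ ↦ s⁻¹, hc, ?_⟩
  simp only [dotProduct, hc, mul_neg_one]
  exact Finset.sum_neg (fun _ _ ↦ neg_neg_of_pos (inv_pos.mpr hs)) Finset.univ_nonempty

/-- The coordinates of the simple roots of `A_{2,III}`, as columns: the eight integral points of
norm `10` in the plane, in cyclic order, placed at height `1`. -/
def rootCoords : Matrix (Fin 3) (Fin 8) ℤ :=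
  !![3, 1, -1, -3, -3, -1, 1, 3;
    1, 3, 3, 1, -1, -3, -3, -1;
    1, 1, 1, 1, 1, 1, 1, 1]

/-- The weights of the Lorentzian form `x² + y² - 8z²`. -/
def rootWeights : Fin 3 → ℤ := ![1, 1, -8]

/-- The Cartan matrix `A_{2,III}`, as the Gram matrix of its simple roots. -/
def cartanA2III : Matrix (Fin 8) (Fin 8) ℤ :=
  rootCoordsᵀ * diagonal rootWeights * rootCoords

theorem cartanA2III_isSymm : cartanA2III.IsSymm := by
  simp only [IsSymm, cartanA2III, transpose_mul, transpose_transpose, diagonal_transpose,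
    Matrix.mul_assoc]

theorem cartanA2III_apply_self (i : Fin 8) : cartanA2III i i = 2 := by
  revert i; decide

theorem cartanA2III_apply_nonpos_of_ne (i : Fin 8) : ∀ j, i ≠ j → cartanA2III i j ≤ 0 := by
  fin_cases i <;> decide

theorem cartanA2III_row_sum (i : Fin 8) : ∑ j, cartanA2III i j = -64 := by
  revert i; decide

theorem cartanA2III_map_intCast (K : Type*) [CommRing K] :
    cartanA2III.map ((↑·) : ℤ → K) = (rootCoords.map ((↑·) : ℤ → K))ᵀ *
      diagonal (fun k ↦ (rootWeights k : K)) * rootCoords.map ((↑·) : ℤ → K) := by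
  change cartanA2III.map (Int.castRingHom K) = _
  rw [cartanA2III, Matrix.map_mul, Matrix.map_mul, transpose_map, diagonal_map (map_zero _)]
  rfl

theorem exists_rootCoords_map_mul_eq_one (K : Type*) [Field K] [CharZero K] :
    ∃ R : Matrix (Fin 8) (Fin 3) K, rootCoords.map ((↑·) : ℤ → K) * R = 1 := by
  -- The rows of `rootCoords` are orthogonal, of norms `40`, `40` and `8`.
  have h : rootCoords * (rootCoordsᵀ * diagonal (![1, 1, 5] : Fin 3 → ℤ)) =
      diagonal fun _ ↦ 40 := by decide
  exact exists_map_intCast_mul_eq_one (by norm_num) h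

theorem cartanA2III_rank : (cartanA2III.map ((↑·) : ℤ → ℚ)).rank = 3 := by
  obtain ⟨R, hR⟩ := exists_rootCoords_map_mul_eq_one ℚ
  rw [cartanA2III_map_intCast, rank_transpose_mul_mul_of_mul_eq_one hR, rank_diagonal]
  simp only [ne_eq, Int.cast_eq_zero]
  decide

theorem cartanA2III_signature :
    ∃ P : Matrix (Fin 8) (Fin 8) ℝ, IsUnit P.det ∧
      Pᵀ * cartanA2III.map ((↑·) : ℤ → ℝ) * P = diagonal ![(1 : ℝ), 1, -1, 0, 0, 0, 0, 0] := by
  obtain ⟨R, hR⟩ := exists_rootCoords_map_mul_eq_one ℝ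
  obtain ⟨P, hP, hPA⟩ := exists_isUnit_det_transpose_mul_mul_eq_diagonal_sign
    (linearIndependent_row_of_mul_eq_one hR) (Fin.castAddEmb 5) fun k ↦ (rootWeights k : ℝ)
  refine ⟨P, hP, ?_⟩
  rw [cartanA2III_map_intCast, hPA]
  have hsign : (fun k ↦ (SignType.sign (rootWeights k : ℝ) : ℝ)) = ![1, 1, -1] := by
    ext k; fin_cases k <;> simp [rootWeights]
  rw [hsign, extend_castAddEmb]
  congr 1
  ext i; fin_cases i <;> rfl

theorem cartanA2III_exists_weylVector :
    ∃ c : Fin 8 → ℚ, (∀ i, (cartanA2III.map ((↑·) : ℤ → ℚ)).mulVec c i = -1) ∧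
      c ⬝ᵥ (cartanA2III.map ((↑·) : ℤ → ℚ)).mulVec c < 0 :=
  exists_weylVector_of_row_sum_eq (s := 64) (by norm_num) fun i ↦ by
    simpa only [map_apply, Int.cast_sum, Int.cast_neg, Int.cast_ofNat] using
      congrArg ((↑·) : ℤ → ℚ) (cartanA2III_row_sum i)

/-- The matrix `A_{2,III}` from Nikulin's list of all twelve symmetric hyperbolic
generalized Cartan matrices of rank 3 with finite-volume fundamental chamber and
lattice Weyl vector of negative square:
(a) it is a symmetric generalized Cartan matrix;
(b) it has rank 3 over ℚ;
(c) the real quadratic form x ↦ xᵀAx is equivalent to the weighted sum of squares with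
    weights (1,1,-1,0,…,0), i.e. A is hyperbolic of rank 3;
(d) it has a lattice Weyl vector of negative square: there is c ∈ ℚ^8 with
    Ac = -(1,…,1)ᵀ and cᵀAc < 0. -/
theorem stmt_7 :
    let A : Matrix (Fin 8) (Fin 8) ℤ :=
      !![2, -2, -8, -16, -18, -14, -8, 0;
        -2, 2, 0, -8, -14, -18, -16, -8;
        -8, 0, 2, -2, -8, -16, -18, -14;
        -16, -8, -2, 2, 0, -8, -14, -18;
        -18, -14, -8, 0, 2, -2, -8, -16;
        -14, -18, -16, -8, -2, 2, 0, -8;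
        -8, -16, -18, -14, -8, 0, 2, -2;
        0, -8, -14, -18, -16, -8, -2, 2]
    -- (a) symmetric generalized Cartan matrix
    (Aᵀ = A ∧ (∀ i, A i i = 2) ∧ (∀ i j, i ≠ j → A i j ≤ 0)) ∧
    -- (b) rank 3 over ℚ
    (A.map ((↑·) : ℤ → ℚ)).rank = 3 ∧
    -- (c) hyperbolic of rank 3: x ↦ xᵀAx over ℝ is equivalent to the weighted
    -- sum of squares with weights (1,1,-1,0,…,0)
    (∃ P : Matrix (Fin 8) (Fin 8) ℝ, IsUnit P.det ∧
      Pᵀ * A.map ((↑·) : ℤ → ℝ) * P = Matrix.diagonal ![(1:ℝ),1,-1,0,0,0,0,0]) ∧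
    -- (d) lattice Weyl vector of negative square
    (∃ c : Fin 8 → ℚ, (∀ i, (A.map ((↑·) : ℤ → ℚ)).mulVec c i = -1) ∧
      c ⬝ᵥ (A.map ((↑·) : ℤ → ℚ)).mulVec c < 0) := by
  intro A
  have hA : A = cartanA2III := by decide
  rw [hA]
  exact ⟨⟨cartanA2III_isSymm.eq, cartanA2III_apply_self, cartanA2III_apply_nonpos_of_ne⟩,
    cartanA2III_rank, cartanA2III_signature, cartanA2III_exists_weylVector⟩
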